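/- Quantitative drop below the supremum under the exterior density condition: Let D ⊂ ℝ^n be an open set with 0 ∈ D, and suppose there exist C₀ > 0, a natural number k₀, and r > 0 such that |D^c ∩ (B_{2^{i+1} r}(0) \ B_{2^i r}(0))| ≥ (C₀/2) · |B_{2^{i+1} r}(0) \ B_{2^i r}(0)| for every integer i ≥ k₀, where |·| denotes Lebesgue measure and D^c = ℝ^n \ D. Let A > 0 and let v : ℝ^n → ℝ be measurable with 0 ≤ v(x) ≤ A for all x ∈ ℝ^n, v(x) = 0 for all x ∈ D^c, and v(0) ≤ B(n,s) ∫_{|y| > r} (r^{2s}/((|y|² − r²)^s |y|^n)) v(y) dy, where B(n,s) = Γ(n/2) sin(πs) / π^{(n/2)+1}. Then there exists a constant C₁ ∈ (0, 1), depending only on n, s, C₀ and k₀, such that v(0) ≤ (1 − C₁) A. -/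

import Mathlib

open MeasureTheory Filter Metric Set

noncomputable section

/-- Points of ℝⁿ with the Euclidean norm. -/
abbrev Pt (n : ℕ) := EuclideanSpace ℝ (Fin n)

/-- The space `L_{2s}`: locally integrable functions `u` with
`∫ |u(x)|/(1+|x|^{n+2s}) dx < ∞`. -/
def MemL2s (n : ℕ) (s : ℝ) (u : Pt n → ℝ) : Prop :=
  LocallyIntegrable u volume ∧
    Integrable (fun x : Pt n => |u x| / (1 + ‖x‖ ^ ((n : ℝ) + 2 * s))) volume

/-- `u` is locally `C^{1,1}` on the open set `D`. -/
def C11loc (n : ℕ) (u : Pt n → ℝ) (D : Set (Pt n)) : Prop :=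
  ∀ x ∈ D, ∃ ε > 0, ball x ε ⊆ D ∧ DifferentiableOn ℝ u (ball x ε) ∧
    ∃ K : NNReal, LipschitzOnWith K (fun y => fderivWithin ℝ u (ball x ε) y) (ball x ε)

/-- `(-Δ)^s u (x) = L`, with the principal value defined as the limit, as `ε → 0⁺`, of
`C_{n,s} ∫_{ℝⁿ \ B_ε(x)} (u(x) - u(y))/|x-y|^{n+2s} dy`. -/
def HasFracLap (n : ℕ) (s Cns : ℝ) (u : Pt n → ℝ) (x : Pt n) (L : ℝ) : Prop :=
  Tendsto (fun ε : ℝ =>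
      Cns * ∫ y in {y : Pt n | ε ≤ dist x y}, (u x - u y) / dist x y ^ ((n : ℝ) + 2 * s))
    (nhdsWithin 0 (Set.Ioi 0)) (nhds L)

/-- The index of the last coordinate (`x_n`). -/
def lastIdx (n : ℕ) (hn : 0 < n) : Fin n := ⟨n - 1, Nat.sub_lt hn Nat.one_pos⟩

/-- The unit vector `e_n` in the `x_n` direction. -/
def eN (n : ℕ) (hn : 0 < n) : Pt n := EuclideanSpace.single (lastIdx n hn) 1

/-- The constant `B(n,s) = Γ(n/2) sin(πs) / π^{n/2+1}` of the exterior Poisson kernel. -/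
def Bns (n : ℕ) (s : ℝ) : ℝ :=
  Real.Gamma ((n : ℝ) / 2) * Real.sin (Real.pi * s) / Real.pi ^ ((n : ℝ) / 2 + 1)

/-!
The normalised exterior Poisson kernel of `B_r` has total mass one: in polar coordinates its
integral becomes a Beta integral, which Euler's reflection formula evaluates. Hence, at the centre,
the Poisson integral of `v` is at most `A` minus `A` times the kernel mass of the zero set of `v`.
In the annulus `a r ≤ |y| < b r` the kernel is at least a multiple of `r ^ (-n)` while the zero set
has volume at least a multiple of `r ^ n`, so this mass is bounded below independently of `r`.
-/

lemma integral_rpow_mul_one_sub_rpow {a b : ℝ} (ha : 0 < a) (hb : 0 < b) :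
    ∫ x in (0 : ℝ)..1, x ^ (a - 1) * (1 - x) ^ (b - 1) = ProbabilityTheory.beta a b := by
  rw [ProbabilityTheory.beta_eq_betaIntegralReal a b ha hb, Complex.betaIntegral,
    ← Complex.ofReal_re (∫ x in (0 : ℝ)..1, _), ← intervalIntegral.integral_ofReal]
  congr 1
  refine intervalIntegral.integral_congr fun x hx => ?_
  rw [uIcc_of_le zero_le_one] at hx
  simp [Complex.ofReal_cpow hx.1, Complex.ofReal_cpow (sub_nonneg.2 hx.2)]

lemma integral_Ioo_rpow_sub_one_mul_one_sub_rpow_neg {s : ℝ} (hs : s ∈ Ioo (0 : ℝ) 1) :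
    ∫ x in Ioo (0 : ℝ) 1, x ^ (s - 1) * (1 - x) ^ (-s) = Real.pi / Real.sin (Real.pi * s) := by
  have hbeta := integral_rpow_mul_one_sub_rpow hs.1 (sub_pos.2 hs.2)
  rw [intervalIntegral.integral_of_le zero_le_one, integral_Ioc_eq_integral_Ioo] at hbeta
  simpa [ProbabilityTheory.beta, Real.Gamma_mul_Gamma_one_sub] using hbeta

lemma sin_pi_mul_pos {s : ℝ} (hs : s ∈ Ioo (0 : ℝ) 1) : 0 < Real.sin (Real.pi * s) :=
  Real.sin_pos_of_pos_of_lt_pi (mul_pos Real.pi_pos hs.1)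
    (mul_lt_of_lt_one_right Real.pi_pos hs.2)

lemma integral_comp_rpow_Ioo_of_neg {F : Type*} [NormedAddCommGroup F] [NormedSpace ℝ F]
    (g : ℝ → F) {p : ℝ} (hp : p < 0) :
    ∫ x in Ioo (0 : ℝ) 1, (|p| * x ^ (p - 1)) • g (x ^ p) = ∫ y in Ioi (1 : ℝ), g y := by
  have hIoi : Ioi (0 : ℝ) ∩ Ioi 1 = Ioi 1 := inter_eq_right.2 (Ioi_subset_Ioi zero_le_one)
  have hIoo : Ioi (0 : ℝ) ∩ Iio 1 = Ioo 0 1 := Ioi_inter_Iio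
  rw [← hIoi, ← setIntegral_indicator measurableSet_Ioi, ← integral_comp_rpow_Ioi _ hp.ne, ← hIoo,
    ← setIntegral_indicator measurableSet_Iio]
  refine setIntegral_congr_fun measurableSet_Ioi fun x (hx : 0 < x) => ?_
  have hmem : x ^ p ∈ Ioi (1 : ℝ) ↔ x ∈ Iio (1 : ℝ) := by
    simp [Real.one_lt_rpow_iff_of_pos hx, hp, hp.not_gt]
  by_cases hx1 : x ∈ Iio (1 : ℝ)
  · simp only [indicator_of_mem hx1, indicator_of_mem (hmem.2 hx1)]
  · simp only [indicator_of_notMem hx1, indicator_of_notMem (hmem.not.2 hx1), smul_zero]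

/-- The radial profile, as a function of `t = |y|`, of the Poisson kernel for `(-Δ)^s` on the
exterior of the ball of radius `r` in dimension `d`, with pole at the centre and without its
normalising constant. The dimension is a free parameter because polar coordinates reduce `d`
to `1`. -/
def exteriorPoissonProfile (d : ℕ) (s r t : ℝ) : ℝ :=
  r ^ (2 * s) / ((t ^ 2 - r ^ 2) ^ s * t ^ d)

section Profile

variable {d : ℕ} {s r t : ℝ}

lemma exteriorPoissonProfile_pos (hr : 0 < r) (ht : r < t) :
    0 < exteriorPoissonProfile d s r t := by
  have ht0 : 0 < t := hr.trans ht
  have hsub : 0 < t ^ 2 - r ^ 2 := sub_pos.2 (pow_lt_pow_left₀ ht hr.le two_ne_zero)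
  unfold exteriorPoissonProfile
  positivity

lemma antitoneOn_exteriorPoissonProfile (hs : 0 ≤ s) (hr : 0 ≤ r) :
    AntitoneOn (exteriorPoissonProfile d s r) (Ioi r) := by
  intro t (ht : r < t) u _ htu
  have ht0 : 0 < t := hr.trans_lt ht
  have hsub : 0 < t ^ 2 - r ^ 2 := sub_pos.2 (pow_lt_pow_left₀ ht hr two_ne_zero)
  have hsub_le : t ^ 2 - r ^ 2 ≤ u ^ 2 - r ^ 2 := by gcongr
  have hsub' : 0 < u ^ 2 - r ^ 2 := hsub.trans_le hsub_le
  unfold exteriorPoissonProfile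
  gcongr

lemma exteriorPoissonProfile_mul_right (hr : 0 < r) (ht : 1 < t) :
    exteriorPoissonProfile d s r (t * r) = exteriorPoissonProfile d s 1 t / r ^ d := by
  have hsub : 0 < t ^ 2 - 1 := sub_pos.2 (one_lt_pow₀ ht two_ne_zero)
  have hfactor : (t * r) ^ 2 - r ^ 2 = r ^ 2 * (t ^ 2 - 1) := by ring
  have hr2s : (r ^ 2) ^ s = r ^ (2 * s) := by rw [Real.rpow_mul hr.le, Real.rpow_two]
  unfold exteriorPoissonProfile
  rw [hfactor, Real.mul_rpow (sq_nonneg r) hsub.le, hr2s, Real.one_rpow, one_pow, mul_pow t r d]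
  field_simp

lemma pow_sub_one_mul_exteriorPoissonProfile (hd : d ≠ 0) (ht : t ≠ 0) :
    t ^ (d - 1) * exteriorPoissonProfile d s r t = exteriorPoissonProfile 1 s r t := by
  unfold exteriorPoissonProfile
  rw [← pow_sub_one_mul hd t]
  field_simp

lemma exteriorPoissonProfile_one_rpow_neg_half {u : ℝ} (hu : u ∈ Ioo (0 : ℝ) 1) :
    u ^ (-(1 / 2) - 1 : ℝ) * exteriorPoissonProfile 1 s 1 (u ^ (-(1 / 2) : ℝ)) =
      u ^ (s - 1) * (1 - u) ^ (-s) := by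
  obtain ⟨hu0, hu1⟩ := hu
  have hu1' : 0 < 1 - u := sub_pos.2 hu1
  have hsq : (u ^ (-(1 / 2) : ℝ)) ^ 2 = u⁻¹ := by
    rw [← Real.rpow_natCast, ← Real.rpow_mul hu0.le, ← Real.rpow_neg_one]
    norm_num
  have hsub : u⁻¹ - 1 = (1 - u) / u := by field_simp
  unfold exteriorPoissonProfile
  rw [hsq, Real.one_rpow, one_pow, hsub, Real.div_rpow hu1'.le hu0.le, Real.rpow_neg hu1'.le,
    Real.rpow_sub_one hu0.ne', Real.rpow_sub_one hu0.ne']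
  field_simp

lemma integral_Ioi_exteriorPoissonProfile_one (hs : s ∈ Ioo (0 : ℝ) 1) (hr : 0 < r) :
    ∫ t in Ioi r, exteriorPoissonProfile 1 s r t = Real.pi / (2 * Real.sin (Real.pi * s)) :=
  calc ∫ t in Ioi r, exteriorPoissonProfile 1 s r t
    _ = r * ∫ t in Ioi 1, exteriorPoissonProfile 1 s r (t * r) := by
      rw [integral_comp_mul_right_Ioi _ _ hr, one_mul, smul_eq_mul, mul_inv_cancel_left₀ hr.ne']
    _ = r * ∫ t in Ioi 1, exteriorPoissonProfile 1 s 1 t / r := by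
      congr 1
      refine setIntegral_congr_fun measurableSet_Ioi fun t ht => ?_
      simpa using exteriorPoissonProfile_mul_right (d := 1) hr ht
    _ = ∫ t in Ioi 1, exteriorPoissonProfile 1 s 1 t := by
      rw [integral_div, mul_div_cancel₀ _ hr.ne']
    _ = ∫ u in Ioo (0 : ℝ) 1, 1 / 2 * (u ^ (s - 1) * (1 - u) ^ (-s)) := by
      rw [← integral_comp_rpow_Ioo_of_neg _ (show -(1 / 2 : ℝ) < 0 by norm_num)]
      refine setIntegral_congr_fun measurableSet_Ioo fun u hu => ?_
      simp only [← exteriorPoissonProfile_one_rpow_neg_half hu, smul_eq_mul, mul_assoc, abs_neg,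
        abs_of_pos (one_half_pos (α := ℝ))]
    _ = Real.pi / (2 * Real.sin (Real.pi * s)) := by
      rw [integral_const_mul, integral_Ioo_rpow_sub_one_mul_one_sub_rpow_neg hs]
      ring

end Profile

lemma integral_mul_le_mul_sub_setIntegral {α : Type*} [MeasurableSpace α] {μ : Measure α}
    {K v : α → ℝ} {A : ℝ} {F : Set α} (hK : Integrable K μ) (hK0 : 0 ≤ᵐ[μ] K)
    (hF : MeasurableSet F) (hv0 : ∀ x, 0 ≤ v x) (hvA : ∀ x, v x ≤ A) (hvF : ∀ x ∈ F, v x = 0) :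
    ∫ x, K x * v x ∂μ ≤ A * (∫ x, K x ∂μ - ∫ x in F, K x ∂μ) :=
  calc ∫ x, K x * v x ∂μ
    _ ≤ ∫ x, A * Fᶜ.indicator K x ∂μ := by
      refine integral_mono_of_nonneg ?_ ((hK.indicator hF.compl).const_mul A) ?_
      · filter_upwards [hK0] with x hx using mul_nonneg hx (hv0 x)
      · filter_upwards [hK0] with x hx
        by_cases hxF : x ∈ F
        · simp [hvF x hxF, hxF]
        · simpa [hxF, mul_comm A] using mul_le_mul_of_nonneg_left (hvA x) hx
    _ = A * (∫ x, K x ∂μ - ∫ x in F, K x ∂μ) := by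
      rw [integral_const_mul, integral_indicator hF.compl, setIntegral_compl hF hK]

lemma measureReal_ball_pos {X : Type*} [PseudoMetricSpace X] [ProperSpace X] [MeasurableSpace X]
    (μ : Measure X) [μ.IsOpenPosMeasure] [IsFiniteMeasureOnCompacts μ] (x : X) {r : ℝ}
    (hr : 0 < r) : 0 < μ.real (ball x r) :=
  ENNReal.toReal_pos (measure_ball_pos μ x hr).ne' measure_ball_lt_top.ne

section AddHaar

variable {E : Type*} [NormedAddCommGroup E] [NormedSpace ℝ E] [FiniteDimensional ℝ E]
  [MeasurableSpace E] [BorelSpace E] (μ : Measure E) [μ.IsAddHaarMeasure]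

lemma measureReal_ball_of_pos (x : E) {r : ℝ} (hr : 0 < r) :
    μ.real (ball x r) = r ^ Module.finrank ℝ E * μ.real (ball 0 1) := by
  rw [measureReal_def, μ.addHaar_ball_of_pos x hr, ENNReal.toReal_mul,
    ENNReal.toReal_ofReal (by positivity), ← measureReal_def]

lemma measureReal_ball_mul_sdiff_ball_mul {a b r : ℝ} (ha : 0 < a) (hab : a ≤ b) (hr : 0 < r) :
    μ.real (ball 0 (b * r) \ ball 0 (a * r)) =
      (b ^ Module.finrank ℝ E - a ^ Module.finrank ℝ E) * r ^ Module.finrank ℝ E *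
        μ.real (ball 0 1) := by
  have hsub : ball (0 : E) (a * r) ⊆ ball 0 (b * r) := by gcongr
  rw [measureReal_sdiff hsub measurableSet_ball,
    measureReal_ball_of_pos μ 0 (mul_pos (ha.trans_le hab) hr),
    measureReal_ball_of_pos μ 0 (mul_pos ha hr)]
  ring

variable [Nontrivial E]

lemma setIntegral_lt_norm_fun_norm_addHaar {F : Type*} [NormedAddCommGroup F] [NormedSpace ℝ F]
    (f : ℝ → F) {r : ℝ} (hr : 0 ≤ r) :
    ∫ y in {y : E | r < ‖y‖}, f ‖y‖ ∂μ = Module.finrank ℝ E • μ.real (ball 0 1) •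
      ∫ t in Ioi r, t ^ (Module.finrank ℝ E - 1) • f t := by
  have hmeas : MeasurableSet {y : E | r < ‖y‖} := measurableSet_lt measurable_const measurable_norm
  have hradial : {y : E | r < ‖y‖}.indicator (fun y => f ‖y‖) = fun y => (Ioi r).indicator f ‖y‖ :=
    rfl
  have hIoi : Ioi 0 ∩ Ioi r = Ioi r := inter_eq_right.2 (Ioi_subset_Ioi hr)
  rw [← integral_indicator hmeas, hradial, integral_fun_norm_addHaar]
  simp_rw [← indicator_smul_apply (Ioi r) (fun t : ℝ => t ^ (Module.finrank ℝ E - 1)) f]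
  rw [setIntegral_indicator measurableSet_Ioi, hIoi]

variable {s r : ℝ}

lemma setIntegral_exteriorPoissonProfile_norm (hs : s ∈ Ioo (0 : ℝ) 1) (hr : 0 < r) :
    ∫ y in {y : E | r < ‖y‖}, exteriorPoissonProfile (Module.finrank ℝ E) s r ‖y‖ ∂μ =
      Module.finrank ℝ E * μ.real (ball 0 1) * (Real.pi / (2 * Real.sin (Real.pi * s))) := by
  rw [setIntegral_lt_norm_fun_norm_addHaar μ _ hr.le,
    ← integral_Ioi_exteriorPoissonProfile_one hs hr, nsmul_eq_mul, smul_eq_mul, mul_assoc]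
  congr 2
  exact setIntegral_congr_fun measurableSet_Ioi fun t ht =>
    pow_sub_one_mul_exteriorPoissonProfile Module.finrank_pos.ne' (hr.trans ht).ne'

lemma integrableOn_exteriorPoissonProfile_norm (hs : s ∈ Ioo (0 : ℝ) 1) (hr : 0 < r) :
    IntegrableOn (fun y : E => exteriorPoissonProfile (Module.finrank ℝ E) s r ‖y‖)
      {y | r < ‖y‖} μ := by
  -- The Bochner integral of a non-integrable function is zero, and this one is not.
  apply Integrable.of_integral_ne_zero
  have hdim : 0 < Module.finrank ℝ E := Module.finrank_pos
  have hball := measureReal_ball_pos μ (0 : E) one_pos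
  have hsin := sin_pi_mul_pos hs
  rw [setIntegral_exteriorPoissonProfile_norm μ hs hr]
  positivity

lemma setIntegral_exteriorPoissonProfile_mul_le (hs : s ∈ Ioo (0 : ℝ) 1) (hr : 0 < r)
    {R A : ℝ} {F : Set E} {v : E → ℝ} (hF : MeasurableSet F) (hrF : ∀ y ∈ F, r < ‖y‖)
    (hFR : F ⊆ ball 0 R) (hv0 : ∀ y, 0 ≤ v y) (hvA : ∀ y, v y ≤ A) (hvF : ∀ y ∈ F, v y = 0) :
    ∫ y in {y | r < ‖y‖}, exteriorPoissonProfile (Module.finrank ℝ E) s r ‖y‖ * v y ∂μ ≤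
      A * (∫ y in {y | r < ‖y‖}, exteriorPoissonProfile (Module.finrank ℝ E) s r ‖y‖ ∂μ -
        exteriorPoissonProfile (Module.finrank ℝ E) s r R * μ.real F) := by
  have hmeas : MeasurableSet {y : E | r < ‖y‖} := measurableSet_lt measurable_const measurable_norm
  have hint := integrableOn_exteriorPoissonProfile_norm μ hs hr
  have hA : 0 ≤ A := (hv0 0).trans (hvA 0)
  have hlower : exteriorPoissonProfile (Module.finrank ℝ E) s r R * μ.real F ≤
      ∫ y in F, exteriorPoissonProfile (Module.finrank ℝ E) s r ‖y‖ ∂μ := by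
    refine setIntegral_ge_of_const_le_real hF (measure_ne_top_of_subset hFR measure_ball_lt_top.ne)
      (fun y hy => ?_) (hint.mono_set hrF)
    have hyR : ‖y‖ < R := mem_ball_zero_iff.1 (hFR hy)
    exact antitoneOn_exteriorPoissonProfile hs.1.le hr.le (hrF y hy) ((hrF y hy).trans hyR) hyR.le
  have hupper := integral_mul_le_mul_sub_setIntegral hint
    (ae_restrict_of_forall_mem hmeas fun y hy => (exteriorPoissonProfile_pos hr hy).le)
    hF hv0 hvA hvF
  rw [Measure.restrict_restrict_of_subset (show F ⊆ {y | r < ‖y‖} from hrF)] at hupper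
  exact hupper.trans (by gcongr)

lemma setIntegral_exteriorPoissonProfile_mul_le_of_annulus_density (hs : s ∈ Ioo (0 : ℝ) 1)
    (hr : 0 < r) {a b θ A : ℝ} (ha : 1 < a) (hab : a ≤ b) {Z : Set E}
    (hZ : θ * μ.real (ball 0 (b * r) \ ball 0 (a * r)) ≤
      μ.real (Z ∩ (ball 0 (b * r) \ ball 0 (a * r))))
    {v : E → ℝ} (hv : Measurable v) (hv0 : ∀ y, 0 ≤ v y) (hvA : ∀ y, v y ≤ A)
    (hvZ : ∀ y ∈ Z, v y = 0) :
    ∫ y in {y | r < ‖y‖}, exteriorPoissonProfile (Module.finrank ℝ E) s r ‖y‖ * v y ∂μ ≤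
      A * (∫ y in {y | r < ‖y‖}, exteriorPoissonProfile (Module.finrank ℝ E) s r ‖y‖ ∂μ -
        exteriorPoissonProfile (Module.finrank ℝ E) s 1 b *
          (θ * ((b ^ Module.finrank ℝ E - a ^ Module.finrank ℝ E) * μ.real (ball 0 1)))) := by
  have ha0 : 0 < a := one_pos.trans ha
  have hb : 1 < b := ha.trans_le hab
  have hA : 0 ≤ A := (hv0 0).trans (hvA 0)
  set F : Set E := v ⁻¹' {0} ∩ (ball 0 (b * r) \ ball 0 (a * r))
  have hFball : F ⊆ ball 0 (b * r) := fun y hy => hy.2.1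
  have hrF : ∀ y ∈ F, r < ‖y‖ := fun y hy =>
    (lt_mul_of_one_lt_left hr ha).trans_le (by simpa using hy.2.2)
  have hFmeas : MeasurableSet F :=
    (hv (measurableSet_singleton 0)).inter (measurableSet_ball.diff measurableSet_ball)
  have hvolume : θ * μ.real (ball 0 (b * r) \ ball 0 (a * r)) ≤ μ.real F :=
    hZ.trans (measureReal_mono (inter_subset_inter_left _ hvZ)
      (measure_ne_top_of_subset hFball measure_ball_lt_top.ne))
  have hmass : exteriorPoissonProfile (Module.finrank ℝ E) s 1 b *
      (θ * ((b ^ Module.finrank ℝ E - a ^ Module.finrank ℝ E) * μ.real (ball 0 1))) ≤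
        exteriorPoissonProfile (Module.finrank ℝ E) s r (b * r) * μ.real F := by
    refine le_trans (le_of_eq ?_) (mul_le_mul_of_nonneg_left hvolume
      (exteriorPoissonProfile_pos hr (lt_mul_of_one_lt_left hr hb)).le)
    rw [exteriorPoissonProfile_mul_right hr hb, measureReal_ball_mul_sdiff_ball_mul μ ha0 hab hr]
    field_simp
  have hdrop := setIntegral_exteriorPoissonProfile_mul_le μ hs hr hFmeas hrF hFball hv0 hvA
    fun y hy => hy.1
  exact hdrop.trans (by gcongr)

end AddHaar

lemma Bns_pos {n : ℕ} (hn : 0 < n) {s : ℝ} (hs : s ∈ Ioo (0 : ℝ) 1) : 0 < Bns n s := by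
  have hsin := sin_pi_mul_pos hs
  unfold Bns
  positivity

lemma volume_real_ball_zero_one {n : ℕ} (hn : 0 < n) :
    volume.real (ball (0 : Pt n) 1) =
      Real.pi ^ ((n : ℝ) / 2) / ((n : ℝ) / 2 * Real.Gamma ((n : ℝ) / 2)) := by
  have : Nonempty (Fin n) := ⟨⟨0, hn⟩⟩
  have hsqrt : √Real.pi ^ n = Real.pi ^ ((n : ℝ) / 2) := by
    rw [Real.sqrt_eq_rpow, ← Real.rpow_mul_natCast Real.pi_pos.le, one_div_mul_eq_div]
  rw [Measure.real, EuclideanSpace.volume_ball, Fintype.card_fin, hsqrt, ENNReal.ofReal_one,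
    one_pow, one_mul, ENNReal.toReal_ofReal (by positivity), Real.Gamma_add_one (by positivity)]

lemma setIntegral_exteriorPoissonProfile_eq_inv_Bns {n : ℕ} (hn : 0 < n) {s r : ℝ}
    (hs : s ∈ Ioo (0 : ℝ) 1) (hr : 0 < r) :
    ∫ y in {y : Pt n | r < ‖y‖}, exteriorPoissonProfile n s r ‖y‖ = (Bns n s)⁻¹ := by
  have : Nonempty (Fin n) := ⟨⟨0, hn⟩⟩
  have hmass := setIntegral_exteriorPoissonProfile_norm (volume : Measure (Pt n)) hs hr
  rw [finrank_euclideanSpace_fin, volume_real_ball_zero_one hn] at hmass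
  have hsin := sin_pi_mul_pos hs
  rw [hmass, Bns, Real.rpow_add_one Real.pi_ne_zero]
  field_simp

theorem quantitative_drop_below_supremum_general {n : ℕ} (hn : 0 < n) {s : ℝ}
    (hs : s ∈ Ioo (0 : ℝ) 1) {a b θ : ℝ} (ha : 1 < a) (hab : a < b) (hθ : 0 < θ) :
    ∃ C1 : ℝ, 0 < C1 ∧ C1 < 1 ∧ ∀ (Z : Set (Pt n)) (r : ℝ), 0 < r →
      θ * volume.real (ball (0 : Pt n) (b * r) \ ball 0 (a * r)) ≤
        volume.real (Z ∩ (ball 0 (b * r) \ ball 0 (a * r))) →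
      ∀ (A : ℝ) (v : Pt n → ℝ), Measurable v → (∀ x, 0 ≤ v x ∧ v x ≤ A) → (∀ x ∈ Z, v x = 0) →
      v 0 ≤ Bns n s * ∫ y in {y : Pt n | r < ‖y‖}, exteriorPoissonProfile n s r ‖y‖ * v y →
      v 0 ≤ (1 - C1) * A := by
  have : Nonempty (Fin n) := ⟨⟨0, hn⟩⟩
  have hB := Bns_pos hn hs
  set q : ℝ := exteriorPoissonProfile n s 1 b *
    (θ * ((b ^ n - a ^ n) * volume.real (ball (0 : Pt n) 1)))
  have hq : 0 < q := by
    have hprofile := exteriorPoissonProfile_pos (d := n) (s := s) one_pos (ha.trans hab)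
    have hpow : 0 < b ^ n - a ^ n :=
      sub_pos.2 (pow_lt_pow_left₀ hab (one_pos.trans ha).le hn.ne')
    have hball := measureReal_ball_pos volume (0 : Pt n) one_pos
    positivity
  refine ⟨min (Bns n s * q) (1 / 2), by positivity,
    (min_le_right _ _).trans_lt one_half_lt_one, fun Z r hr hZ A v hv hvA hvZ hv_le => ?_⟩
  have hA : 0 ≤ A := (hvA 0).1.trans (hvA 0).2
  have hdrop := setIntegral_exteriorPoissonProfile_mul_le_of_annulus_density volume hs hr ha hab.le
    hZ hv (fun y => (hvA y).1) (fun y => (hvA y).2) hvZ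
  rw [finrank_euclideanSpace_fin, setIntegral_exteriorPoissonProfile_eq_inv_Bns hn hs hr] at hdrop
  calc v 0
    _ ≤ Bns n s * (A * ((Bns n s)⁻¹ - q)) := hv_le.trans (by gcongr)
    _ = (1 - Bns n s * q) * A := by field_simp
    _ ≤ (1 - min (Bns n s * q) (1 / 2)) * A := by gcongr; exact min_le_left _ _

/-- Quantitative drop below the supremum under the exterior density condition. -/
theorem quantitative_drop_below_supremum
    (n : ℕ) (hn : 0 < n) (s : ℝ) (hs : s ∈ Set.Ioo (0 : ℝ) 1)
    (C0 : ℝ) (hC0 : 0 < C0) (k0 : ℕ) :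
    ∃ C1 : ℝ, 0 < C1 ∧ C1 < 1 ∧
      ∀ (D : Set (Pt n)), IsOpen D → (0 : Pt n) ∈ D →
      ∀ r : ℝ, 0 < r →
      (∀ i : ℕ, k0 ≤ i →
        C0 / 2 * (volume (ball (0 : Pt n) ((2 : ℝ) ^ (i + 1) * r) \
            ball (0 : Pt n) ((2 : ℝ) ^ i * r))).toReal ≤
          (volume (Dᶜ ∩ (ball (0 : Pt n) ((2 : ℝ) ^ (i + 1) * r) \
            ball (0 : Pt n) ((2 : ℝ) ^ i * r)))).toReal) →
      ∀ A : ℝ, 0 < A → ∀ v : Pt n → ℝ, Measurable v →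
      (∀ x : Pt n, 0 ≤ v x ∧ v x ≤ A) →
      (∀ x ∈ Dᶜ, v x = 0) →
      v 0 ≤ Bns n s * ∫ y in {y : Pt n | r < ‖y‖},
          r ^ (2 * s) / ((‖y‖ ^ 2 - r ^ 2) ^ s * ‖y‖ ^ (n : ℕ)) * v y →
      v 0 ≤ (1 - C1) * A := by
  obtain ⟨C1, hC1_pos, hC1_lt, hdrop⟩ := quantitative_drop_below_supremum_general hn hs
    (one_lt_pow₀ (one_lt_two (α := ℝ)) k0.succ_ne_zero)
    (pow_lt_pow_right₀ (one_lt_two (α := ℝ)) (k0 + 1).lt_succ_self) (half_pos hC0)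
  exact ⟨C1, hC1_pos, hC1_lt, fun D _ _ r hr hdensity A _ v =>
    hdrop Dᶜ r hr (hdensity (k0 + 1) k0.le_succ) A v⟩
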